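/- Let U ⊆ E be open, let m ≥ 1, and let u : E → EuclideanSpace ℝ (Fin m) satisfy ContDiffOn ℝ 2 u U, with components u_j x := ⟪u x, f j⟫. Then the following are equivalent: (i) for every Ψ : E → EuclideanSpace ℝ (Fin m) with ContDiff ℝ ∞ Ψ, HasCompactSupport Ψ and tsupport Ψ ⊆ U, one has ∫ x in U, ∑ j, ⟪∇(fun y => u_j y) x, ∇(fun y => ⟪Ψ y, f j⟫) x⟫ = 0; (ii) every component is harmonic on U, i.e. for every j : Fin m and every x ∈ U, Δ(fun y => u_j y) x = 0. -/

import Mathlib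

open MeasureTheory RealInnerProductSpace

/-!
By Green's identity `∫ ⟪∇w, ∇φ⟫ = -∫ φ Δw` and the fundamental lemma of the calculus of variations,
a scalar `C²` function is harmonic iff it is orthogonal in the Dirichlet form to all test functions.
Testing with `φ • b j`, for `b` orthonormal, isolates the `j`-th component of a vector-valued
function, while every vector-valued test function is tested componentwise; so the vector-valued
statement decouples into the scalar ones.
-/

section WeaklyHarmonic

open scoped ContDiff Gradient Laplacian

section Calculus

variable {E F ι : Type*} [NormedAddCommGroup E] [InnerProductSpace ℝ E] [Fintype ι]

lemma inner_gradient_eq_sum_fderiv_mul_fderiv [CompleteSpace E] (e : OrthonormalBasis ι ℝ E)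
    (v w : E → ℝ) (x : E) :
    ⟪∇ v x, ∇ w x⟫ = ∑ i, fderiv ℝ v x (e i) * fderiv ℝ w x (e i) := by
  rw [← e.sum_inner_mul_inner]
  simp only [inner_gradient_left, inner_gradient_right, conj_trivial]

lemma sum_inner_gradient_inner_smul [CompleteSpace E] [NormedAddCommGroup F]
    [InnerProductSpace ℝ F] {b : ι → F} (hb : Orthonormal ℝ b) (v : ι → E) (φ : E → ℝ) (j : ι)
    (x : E) :
    ∑ k, ⟪v k, ∇ (fun y => ⟪φ y • b j, b k⟫) x⟫ = ⟪v j, ∇ φ x⟫ := by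
  rw [Fintype.sum_eq_single j]
  · simp [real_inner_smul_left, hb.1 j]
  · intro k hk
    simp [real_inner_smul_left, hb.2 hk.symm]

variable [FiniteDimensional ℝ E] [NormedAddCommGroup F] [NormedSpace ℝ F]

lemma laplacian_eq_sum_fderiv_fderiv (e : OrthonormalBasis ι ℝ E) {w : E → F} {x : E}
    (hw : ContDiffAt ℝ 2 w x) :
    Δ w x = ∑ i, fderiv ℝ (fun y => fderiv ℝ w y (e i)) x (e i) := by
  have hw' : DifferentiableAt ℝ (fderiv ℝ w) x :=
    (hw.fderiv_right (m := 1) (by norm_num)).differentiableAt one_ne_zero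
  simp [InnerProductSpace.laplacian_eq_iteratedFDeriv_orthonormalBasis w e,
    iteratedFDeriv_two_apply, fderiv_clm_apply hw' (differentiableAt_const _)]

lemma continuousOn_laplacian {w : E → F} {U : Set E} (hU : IsOpen U) (hw : ContDiffOn ℝ 2 w U) :
    ContinuousOn (Δ w) U := by
  rw [InnerProductSpace.laplacian_eq_iteratedFDeriv_stdOrthonormalBasis]
  have hw₂ : ContinuousOn (iteratedFDeriv ℝ 2 w) U :=
    ContinuousOn.continuousOn_iteratedFDeriv hw hU le_rfl
  exact continuousOn_finsetSum _ fun i _ => hw₂.eval_const _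

end Calculus

section TestFunctions

variable {E F : Type*} [NormedAddCommGroup E] [NormedSpace ℝ E]

/-- `φ` is a `C^k` test function on `U`. This is the unbundled form of `φ ∈ 𝓓^{k}(U, F)`, convenient
here because test functions are built by applying `fderiv`, `inner` and `•` to plain functions. -/
structure IsTestFunctionOn [NormedAddCommGroup F] [NormedSpace ℝ F] (k : ℕ∞ω) (φ : E → F)
    (U : Set E) : Prop where
  contDiff : ContDiff ℝ k φ
  hasCompactSupport : HasCompactSupport φ
  tsupport_subset : tsupport φ ⊆ U

namespace IsTestFunctionOn

variable {k l : ℕ∞ω} {U : Set E}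

section NormedSpace

variable [NormedAddCommGroup F] [NormedSpace ℝ F] {φ : E → F}

lemma of_le (hφ : IsTestFunctionOn k φ U) (hlk : l ≤ k) : IsTestFunctionOn l φ U :=
  ⟨hφ.contDiff.of_le hlk, hφ.hasCompactSupport, hφ.tsupport_subset⟩

lemma eq_zero_of_notMem (hφ : IsTestFunctionOn k φ U) {x : E} (hx : x ∉ U) : φ x = 0 :=
  image_eq_zero_of_notMem_tsupport fun h => hx (hφ.tsupport_subset h)

lemma fderiv_eq_zero_of_notMem (hφ : IsTestFunctionOn k φ U) {x : E} (hx : x ∉ U) :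
    fderiv ℝ φ x = 0 :=
  fderiv_of_notMem_tsupport ℝ fun h => hx (hφ.tsupport_subset h)

lemma fderiv_apply (hφ : IsTestFunctionOn k φ U) (hlk : l + 1 ≤ k) (v : E) :
    IsTestFunctionOn l (fun x => fderiv ℝ φ x v) U where
  contDiff := (hφ.contDiff.fderiv_right hlk).clm_apply contDiff_const
  hasCompactSupport := hφ.hasCompactSupport.fderiv_apply ℝ v
  tsupport_subset := (tsupport_fderiv_apply_subset ℝ v).trans hφ.tsupport_subset

end NormedSpace

lemma smul_const [NormedAddCommGroup F] [NormedSpace ℝ F] {φ : E → ℝ}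
    (hφ : IsTestFunctionOn k φ U) (c : F) : IsTestFunctionOn k (fun x => φ x • c) U where
  contDiff := hφ.contDiff.smul contDiff_const
  hasCompactSupport := hφ.hasCompactSupport.smul_right
  tsupport_subset := (tsupport_smul_subset_left φ _).trans hφ.tsupport_subset

lemma inner_const [NormedAddCommGroup F] [InnerProductSpace ℝ F] {φ : E → F}
    (hφ : IsTestFunctionOn k φ U) (c : F) : IsTestFunctionOn k (fun x => ⟪φ x, c⟫) U where
  contDiff := hφ.contDiff.inner ℝ contDiff_const
  hasCompactSupport := hφ.hasCompactSupport.comp_left (g := (⟪·, c⟫)) (inner_zero_left c)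
  tsupport_subset :=
    (tsupport_comp_subset (g := (⟪·, c⟫)) (inner_zero_left c) φ).trans hφ.tsupport_subset

variable [MeasurableSpace E] [BorelSpace E] {μ : Measure E}

lemma integrable_mul [IsFiniteMeasureOnCompacts μ] {φ f : E → ℝ} (hφ : IsTestFunctionOn k φ U)
    (hU : IsOpen U) (hf : ContinuousOn f U) : Integrable (fun x => f x * φ x) μ :=
  ((hf.mul hφ.contDiff.continuous.continuousOn).continuous_of_tsupport_subset hU
    ((tsupport_mul_subset_right (f := f)).trans
      hφ.tsupport_subset)).integrable_of_hasCompactSupport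
    (hφ.hasCompactSupport.mul_left (f := f))

variable [FiniteDimensional ℝ E] [μ.IsAddHaarMeasure]

lemma integral_mul_fderiv_eq_neg {φ f : E → ℝ} (hφ : IsTestFunctionOn 1 φ U) (hU : IsOpen U)
    (hf : ContDiffOn ℝ 1 f U) (v : E) :
    ∫ x, f x * fderiv ℝ φ x v ∂μ = -∫ x, fderiv ℝ f x v * φ x ∂μ := by
  have hf' : ContinuousOn (fun x => fderiv ℝ f x v) U :=
    (hf.continuousOn_fderiv_of_isOpen hU le_rfl).clm_apply continuousOn_const
  exact integral_mul_fderiv_eq_neg_fderiv_mul_of_integrable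
    (hφ.integrable_mul hU hf')
    ((hφ.fderiv_apply (l := 0) (by simp) v).integrable_mul hU hf.continuousOn)
    (hφ.integrable_mul hU hf.continuousOn)
    (fun x hx => (hf.differentiableOn one_ne_zero).differentiableAt
      (hU.mem_nhds (hφ.tsupport_subset hx)))
    (fun x _ => hφ.contDiff.differentiable one_ne_zero x)

end IsTestFunctionOn

/-- The fundamental lemma of the calculus of variations, for continuous functions. -/
theorem forall_integral_smul_eq_zero_iff [FiniteDimensional ℝ E] [MeasurableSpace E] [BorelSpace E]
    {μ : Measure E} [IsLocallyFiniteMeasure μ] [μ.IsOpenPosMeasure] [NormedAddCommGroup F]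
    [NormedSpace ℝ F] [CompleteSpace F] {f : E → F} {U : Set E} (hU : IsOpen U)
    (hf : ContinuousOn f U) :
    (∀ φ : E → ℝ, IsTestFunctionOn ∞ φ U → ∫ x, φ x • f x ∂μ = 0) ↔ ∀ x ∈ U, f x = 0 := by
  refine ⟨fun h => ?_, fun h φ hφ => ?_⟩
  · have hae : ∀ᵐ x ∂μ, x ∈ U → f x = 0 :=
      hU.ae_eq_zero_of_integral_contDiff_smul_eq_zero (hf.locallyIntegrableOn hU.measurableSet)
        fun φ hφ hφc hφU => h φ ⟨hφ, hφc, hφU⟩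
    exact Measure.eqOn_open_of_ae_eq ((ae_restrict_iff' hU.measurableSet).2 hae) hU hf
      continuousOn_const
  · refine integral_eq_zero_of_ae (.of_forall fun x => ?_)
    by_cases hx : x ∈ U
    · simp [h x hx]
    · simp [hφ.eq_zero_of_notMem hx]

end TestFunctions

section DirichletForm

variable {E : Type*} [NormedAddCommGroup E] [InnerProductSpace ℝ E] [MeasurableSpace E]
  {μ : Measure E} {U : Set E} {w φ : E → ℝ}

/-- `w` is a weak solution of Laplace's equation on `U`: it is orthogonal to every smooth test
function on `U` in the Dirichlet form. The gradient of `w` is the classical one, so the notion is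
meant for functions `w` that are differentiable on `U`. -/
def IsWeaklyHarmonicOn [CompleteSpace E] (w : E → ℝ) (U : Set E) (μ : Measure E) : Prop :=
  ∀ φ : E → ℝ, IsTestFunctionOn ∞ φ U → ∫ x in U, ⟪∇ w x, ∇ φ x⟫ ∂μ = 0

lemma setIntegral_inner_gradient_eq_integral [CompleteSpace E] {k : ℕ∞ω}
    (hφ : IsTestFunctionOn k φ U) :
    ∫ x in U, ⟪∇ w x, ∇ φ x⟫ ∂μ = ∫ x, ⟪∇ w x, ∇ φ x⟫ ∂μ :=
  setIntegral_eq_integral_of_forall_compl_eq_zero fun x hx => by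
    simp [gradient, hφ.fderiv_eq_zero_of_notMem hx]

variable [FiniteDimensional ℝ E] [BorelSpace E]

lemma integrable_inner_gradient [IsFiniteMeasureOnCompacts μ] (hU : IsOpen U)
    (hw : ContDiffOn ℝ 1 w U) (hφ : IsTestFunctionOn 1 φ U) :
    Integrable (fun x => ⟪∇ w x, ∇ φ x⟫) μ := by
  simp only [inner_gradient_eq_sum_fderiv_mul_fderiv (stdOrthonormalBasis ℝ E)]
  exact integrable_finsetSum _ fun i _ => (hφ.fderiv_apply (l := 0) (by simp) _).integrable_mul hU
    ((hw.continuousOn_fderiv_of_isOpen hU le_rfl).clm_apply continuousOn_const)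

/-- Green's first identity; there is no boundary term because `φ` has compact support in `U`. -/
theorem integral_inner_gradient_eq_neg_integral_mul_laplacian [μ.IsAddHaarMeasure] (hU : IsOpen U)
    (hw : ContDiffOn ℝ 2 w U) (hφ : IsTestFunctionOn 1 φ U) :
    ∫ x, ⟪∇ w x, ∇ φ x⟫ ∂μ = -∫ x, φ x * Δ w x ∂μ := by
  let e := stdOrthonormalBasis ℝ E
  have hdw i : ContDiffOn ℝ 1 (fun y => fderiv ℝ w y (e i)) U :=
    (hw.fderiv_of_isOpen hU (by norm_num)).clm_apply contDiffOn_const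
  have hddw i : ContinuousOn (fun x => fderiv ℝ (fun y => fderiv ℝ w y (e i)) x (e i)) U :=
    ((hdw i).continuousOn_fderiv_of_isOpen hU le_rfl).clm_apply continuousOn_const
  have hφΔ x : φ x * Δ w x = ∑ i, fderiv ℝ (fun y => fderiv ℝ w y (e i)) x (e i) * φ x := by
    by_cases hx : x ∈ U
    · rw [laplacian_eq_sum_fderiv_fderiv e (hw.contDiffAt (hU.mem_nhds hx)), mul_comm,
        Finset.sum_mul]
    · simp [hφ.eq_zero_of_notMem hx]
  calc ∫ x, ⟪∇ w x, ∇ φ x⟫ ∂μ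
      = ∑ i, ∫ x, fderiv ℝ w x (e i) * fderiv ℝ φ x (e i) ∂μ := by
        simp only [inner_gradient_eq_sum_fderiv_mul_fderiv e]
        exact integral_finsetSum _ fun i _ =>
          (hφ.fderiv_apply (l := 0) (by simp) _).integrable_mul hU (hdw i).continuousOn
    _ = ∑ i, -∫ x, fderiv ℝ (fun y => fderiv ℝ w y (e i)) x (e i) * φ x ∂μ :=
        Finset.sum_congr rfl fun i _ => hφ.integral_mul_fderiv_eq_neg hU (hdw i) (e i)
    _ = -∫ x, φ x * Δ w x ∂μ := by
        simp only [hφΔ]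
        rw [Finset.sum_neg_distrib, integral_finsetSum _ fun i _ => hφ.integrable_mul hU (hddw i)]

theorem isWeaklyHarmonicOn_iff_laplacian_eq_zero [μ.IsAddHaarMeasure] (hU : IsOpen U)
    (hw : ContDiffOn ℝ 2 w U) : IsWeaklyHarmonicOn w U μ ↔ ∀ x ∈ U, Δ w x = 0 := by
  rw [← forall_integral_smul_eq_zero_iff (μ := μ) hU (continuousOn_laplacian hU hw)]
  refine forall₂_congr fun φ hφ => ?_
  have hφ₁ : IsTestFunctionOn 1 φ U := hφ.of_le (by simp)
  rw [setIntegral_inner_gradient_eq_integral hφ,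
    integral_inner_gradient_eq_neg_integral_mul_laplacian hU hw hφ₁, neg_eq_zero]
  simp only [smul_eq_mul]

variable {F ι : Type*} [NormedAddCommGroup F] [InnerProductSpace ℝ F] [Fintype ι] {b : ι → F}

theorem forall_setIntegral_sum_inner_gradient_eq_zero_iff [IsFiniteMeasureOnCompacts μ]
    (hb : Orthonormal ℝ b) (hU : IsOpen U) {w : ι → E → ℝ} (hw : ∀ j, ContDiffOn ℝ 1 (w j) U) :
    (∀ Ψ : E → F, IsTestFunctionOn ∞ Ψ U →
        ∫ x in U, ∑ j, ⟪∇ (w j) x, ∇ (fun y => ⟪Ψ y, b j⟫) x⟫ ∂μ = 0) ↔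
      ∀ j, IsWeaklyHarmonicOn (w j) U μ := by
  refine ⟨fun h j φ hφ => ?_, fun h Ψ hΨ => ?_⟩
  · simpa only [sum_inner_gradient_inner_smul hb] using h _ (hφ.smul_const (b j))
  · rw [integral_finsetSum _ fun j _ => (integrable_inner_gradient hU (hw j)
      ((hΨ.inner_const (b j)).of_le (by simp))).integrableOn]
    exact Finset.sum_eq_zero fun j _ => h j _ (hΨ.inner_const (b j))

theorem stmt_14_general [μ.IsAddHaarMeasure] (hb : Orthonormal ℝ b) (hU : IsOpen U) {u : E → F}
    (hu : ContDiffOn ℝ 2 u U) :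
    (∀ Ψ : E → F, ContDiff ℝ ∞ Ψ → HasCompactSupport Ψ → tsupport Ψ ⊆ U →
        ∫ x in U, ∑ j, ⟪∇ (fun y => ⟪u y, b j⟫) x, ∇ (fun y => ⟪Ψ y, b j⟫) x⟫ ∂μ = 0) ↔
      ∀ j, ∀ x ∈ U, Δ (fun y => ⟪u y, b j⟫) x = 0 := by
  have hcomp j : ContDiffOn ℝ 2 (fun y => ⟪u y, b j⟫) U := hu.inner ℝ contDiffOn_const
  simp only [← isWeaklyHarmonicOn_iff_laplacian_eq_zero (μ := μ) hU (hcomp _)]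
  rw [← forall_setIntegral_sum_inner_gradient_eq_zero_iff hb hU
    fun j => (hcomp j).of_le one_le_two]
  exact ⟨fun h Ψ hΨ => h Ψ hΨ.contDiff hΨ.hasCompactSupport hΨ.tsupport_subset,
    fun h Ψ hΨ hΨc hΨU => h Ψ ⟨hΨ, hΨc, hΨU⟩⟩

end DirichletForm

end WeaklyHarmonic

theorem stmt_14 (n m : ℕ) (hn : 1 ≤ n) (hm : 1 ≤ m)
    (U : Set (EuclideanSpace ℝ (Fin n))) (hU : IsOpen U)
    (u : EuclideanSpace ℝ (Fin n) → EuclideanSpace ℝ (Fin m))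
    (hu : ContDiffOn ℝ 2 u U) :
    (∀ Ψ : EuclideanSpace ℝ (Fin n) → EuclideanSpace ℝ (Fin m),
        ContDiff ℝ (⊤ : ℕ∞) Ψ → HasCompactSupport Ψ → tsupport Ψ ⊆ U →
        ∫ x in U, ∑ j : Fin m,
          ⟪gradient (fun y => ⟪u y, EuclideanSpace.single j (1:ℝ)⟫) x,
            gradient (fun y => ⟪Ψ y, EuclideanSpace.single j (1:ℝ)⟫) x⟫ = 0) ↔
      (∀ j : Fin m, ∀ x ∈ U, (∑ i : Fin n,
          fderiv ℝ (fun y =>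
              fderiv ℝ (fun z => ⟪u z, EuclideanSpace.single j (1:ℝ)⟫) y
                (EuclideanSpace.single i (1:ℝ))) x
            (EuclideanSpace.single i (1:ℝ))) = 0) := by
  refine (stmt_14_general (EuclideanSpace.orthonormal_single (𝕜 := ℝ)) hU hu).trans <|
    forall₃_congr fun j x hx => ?_
  rw [laplacian_eq_sum_fderiv_fderiv (EuclideanSpace.basisFun (Fin n) ℝ)
    ((hu.contDiffAt (hU.mem_nhds hx)).inner ℝ contDiffAt_const)]
  simp only [EuclideanSpace.basisFun_apply]
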